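/- Fix a constant R* > 0, and for each n let C_W = C_W(n) ∈ ℝ₊. Suppose W, Ŵ ∈ ℝⁿ and s, ŝ ∈ ℝ₊ⁿ satisfy ‖W‖∞ ≤ C_W, ‖Ŵ‖∞ ≤ C_W, Σⱼ sⱼ = Σⱼ ŝⱼ = n, ‖W − Ŵ‖∞ ≤ γ₁ C_W, and ‖s − ŝ‖₂ ≤ γ₂ √n. Define τ(W, s) = (T Σⱼ Wⱼ² sⱼ²/(1 + sⱼT)²)^{1/2} · (Σⱼ sⱼ/(1 + sⱼT))^{−1/2} where T = T_rc(s, R*), and similarly τ(Ŵ, ŝ) with T̂ = T_rc(ŝ, R*). Then there is a constant c = c(R*) such that for all sufficiently large n: |τ(W, s) − τ(Ŵ, ŝ)| ≤ γ₁ C_W + c · C_W γ₂ n⁴ 2^{4nR*}. -/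

import Mathlib

open Real

/-- Euclidean (`ℓ₂`) norm of a vector in `ℝⁿ`. -/
noncomputable def l2norm {n : ℕ} (v : Fin n → ℝ) : ℝ :=
  Real.sqrt (∑ i, (v i) ^ 2)

/-- Random-coding rate `R_rc(λ, T) = (1/(2n)) Σᵢ log₂(1 + λᵢ T)`. -/
noncomputable def Rrc {n : ℕ} (lam : Fin n → ℝ) (T : ℝ) : ℝ :=
  (1 / (2 * (n : ℝ))) * ∑ i, Real.logb 2 (1 + lam i * T)

/-- `T_rc(λ, R)`: the unique `T > 0` with `R_rc(λ, T) = R`. -/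
noncomputable def Trc {n : ℕ} (lam : Fin n → ℝ) (R : ℝ) : ℝ :=
  Classical.epsilon fun T => 0 < T ∧ Rrc lam T = R

/-- Scaling parameter `τ(W, s)` with weights `s` and parameter `T`:
`τ = (T Σⱼ Wⱼ² sⱼ²/(1+sⱼT)²)^{1/2} (Σⱼ sⱼ/(1+sⱼT))^{-1/2}`. -/
noncomputable def tauDef {n : ℕ} (s W : Fin n → ℝ) (T : ℝ) : ℝ :=
  Real.sqrt (T * ∑ j, (W j) ^ 2 * (s j) ^ 2 / (1 + s j * T) ^ 2) /
    Real.sqrt (∑ j, s j / (1 + s j * T))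

/-!
`τ` depends on `(s, T)` only through the gains `pⱼ = sⱼT / (1 + sⱼT)`: it is the ratio
`‖W p‖₂ / √(∑ pⱼ)`, which is nonexpansive in `W` for the sup norm and Lipschitz in `p` for the `ℓ₁`
norm as long as `∑ pⱼ` stays away from `0`. The rate equation reads `∏ (1 + sⱼT) = 2 ^ (2nR)`. It
forces some factor to be at least `2 ^ (2R)`, so that `∑ pⱼ ≥ 1 - 2 ^ (-2R)`, and, as the product
dominates `1 + ∑ sⱼT`, it gives `nT ≤ 2 ^ (2nR)`. Finally the derivative of `∑ log (1 + sⱼT)` in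
`log T` is `∑ pⱼ`, so the same lower bound controls how fast the solution `T` moves with `s`.
-/

theorem one_add_sum_le_prod_one_add {ι R : Type*} [CommSemiring R] [PartialOrder R]
    [IsOrderedRing R] (S : Finset ι) {x : ι → R} (hx : ∀ i ∈ S, 0 ≤ x i) :
    1 + ∑ i ∈ S, x i ≤ ∏ i ∈ S, (1 + x i) := by
  classical
  induction S using Finset.induction_on with
  | empty => simp
  | insert a S ha ih =>
    rw [Finset.forall_mem_insert] at hx
    have one_le : 1 ≤ ∏ i ∈ S, (1 + x i) :=
      Finset.one_le_prod fun i hi => le_add_of_nonneg_right (hx.2 i hi)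
    calc 1 + ∑ i ∈ insert a S, x i = (1 + ∑ i ∈ S, x i) + x a * 1 := by
          rw [Finset.sum_insert ha]; ring
      _ ≤ ∏ i ∈ S, (1 + x i) + x a * ∏ i ∈ S, (1 + x i) :=
          add_le_add (ih hx.2) (mul_le_mul_of_nonneg_left one_le hx.1)
      _ = ∏ i ∈ insert a S, (1 + x i) := by rw [Finset.prod_insert ha]; ring

theorem sub_div_one_add_le_log_sub_log {a b : ℝ} (ha : 0 < 1 + a) (hb : 0 < 1 + b) :
    (b - a) / (1 + b) ≤ log (1 + b) - log (1 + a) := by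
  rw [← log_div hb.ne' ha.ne']
  refine le_of_eq_of_le ?_ (one_sub_inv_le_log_of_pos (div_pos hb ha))
  field_simp
  ring

theorem log_one_add_sub_log_one_add_le {a b : ℝ} (ha : 0 ≤ a) (hb : 0 ≤ b) :
    log (1 + a) - log (1 + b) ≤ |a - b| := by
  have concave := sub_div_one_add_le_log_sub_log (a := a) (b := b) (by linarith) (by linarith)
  have shrink : |b - a| / (1 + b) ≤ |b - a| := div_le_self (abs_nonneg _) (by linarith)
  have lower := neg_abs_le ((b - a) / (1 + b))
  rw [abs_div, abs_of_pos (by linarith : 0 < 1 + b)] at lower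
  rw [abs_sub_comm]
  linarith

/-- The Wiener gain `x / (1 + x)` of a Gaussian component with signal-to-noise ratio `x ≥ 0`. -/
noncomputable def wienerGain (x : ℝ) : ℝ :=
  x / (1 + x)

theorem wienerGain_nonneg {x : ℝ} (hx : 0 ≤ x) : 0 ≤ wienerGain x :=
  div_nonneg hx (by linarith)

theorem wienerGain_le_one {x : ℝ} (hx : 0 ≤ x) : wienerGain x ≤ 1 :=
  div_le_one_of_le₀ (by linarith) (by linarith)

theorem one_sub_inv_le_wienerGain {c x : ℝ} (hc : 0 < c) (hcx : c ≤ 1 + x) :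
    1 - c⁻¹ ≤ wienerGain x := by
  have gain_eq : wienerGain x = 1 - (1 + x)⁻¹ := by
    have : 1 + x ≠ 0 := by linarith
    rw [wienerGain]
    field_simp
    ring
  rw [gain_eq]
  gcongr

theorem abs_wienerGain_sub_wienerGain_le {x y : ℝ} (hx : 0 ≤ x) (hy : 0 ≤ y) :
    |wienerGain x - wienerGain y| ≤ |x - y| := by
  have sub_eq : wienerGain x - wienerGain y = (x - y) / ((1 + x) * (1 + y)) := by
    unfold wienerGain
    field_simp
    ring
  rw [sub_eq, abs_div, abs_of_pos (a := (1 + x) * (1 + y)) (by positivity)]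
  exact div_le_self (abs_nonneg _) (by nlinarith [mul_nonneg hx hy])

section EuclideanNorm

variable {ι : Type*} [Fintype ι]

theorem norm_toLp_two_mul_le (V u : ι → ℝ) :
    ‖WithLp.toLp 2 (V * u)‖ ≤ ‖V‖ * ‖WithLp.toLp 2 u‖ := by
  rw [EuclideanSpace.norm_eq, EuclideanSpace.norm_eq, ← sqrt_sq (norm_nonneg V),
    ← sqrt_mul (sq_nonneg _), Finset.mul_sum]
  refine sqrt_le_sqrt (Finset.sum_le_sum fun i _ => ?_)
  rw [← mul_pow, PiLp.toLp_apply, Pi.mul_apply, norm_mul]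
  gcongr
  exact norm_le_pi_norm V i

theorem norm_toLp_two_le_sum_abs (u : ι → ℝ) : ‖WithLp.toLp 2 u‖ ≤ ∑ i, |u i| := by
  rw [EuclideanSpace.norm_eq]
  exact sqrt_le_iff.mpr ⟨Finset.sum_nonneg fun i _ => abs_nonneg _,
    Finset.sum_sq_le_sq_sum_of_nonneg fun i _ => abs_nonneg _⟩

theorem norm_toLp_two_le_sqrt_sum {p : ι → ℝ} (hp₀ : ∀ i, 0 ≤ p i) (hp₁ : ∀ i, p i ≤ 1) :
    ‖WithLp.toLp 2 p‖ ≤ √(∑ i, p i) := by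
  rw [EuclideanSpace.norm_eq]
  refine sqrt_le_sqrt (Finset.sum_le_sum fun i _ => ?_)
  rw [norm_eq_abs, sq_abs]
  exact pow_le_of_le_one (hp₀ i) (hp₁ i) two_ne_zero

end EuclideanNorm

section TauOfGains

variable {ι : Type*} [Fintype ι]

/-- The scaling parameter `τ` as a function of the weights `W` and of the gains
`pⱼ = sⱼT / (1 + sⱼT)`; see `tauDef_eq_tauOfGains`. -/
noncomputable def tauOfGains (W p : ι → ℝ) : ℝ :=
  ‖WithLp.toLp 2 (W * p)‖ / √(∑ i, p i)

theorem tauOfGains_nonneg (W p : ι → ℝ) : 0 ≤ tauOfGains W p := by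
  unfold tauOfGains
  positivity

theorem tauOfGains_le_norm (W : ι → ℝ) {p : ι → ℝ} (hp₀ : ∀ i, 0 ≤ p i) (hp₁ : ∀ i, p i ≤ 1) :
    tauOfGains W p ≤ ‖W‖ :=
  div_le_of_le_mul₀ (sqrt_nonneg _) (norm_nonneg W) <| (norm_toLp_two_mul_le W p).trans <|
    mul_le_mul_of_nonneg_left (norm_toLp_two_le_sqrt_sum hp₀ hp₁) (norm_nonneg W)

theorem abs_tauOfGains_sub_weights_le (W V : ι → ℝ) {p : ι → ℝ} (hp₀ : ∀ i, 0 ≤ p i)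
    (hp₁ : ∀ i, p i ≤ 1) : |tauOfGains W p - tauOfGains V p| ≤ ‖W - V‖ := by
  have triangle : |tauOfGains W p - tauOfGains V p| ≤ tauOfGains (W - V) p := by
    unfold tauOfGains
    rw [← sub_div, abs_div, abs_of_nonneg (sqrt_nonneg _), sub_mul, WithLp.toLp_sub]
    gcongr
    exact abs_norm_sub_norm_le _ _
  exact triangle.trans (tauOfGains_le_norm _ hp₀ hp₁)

theorem abs_sqrt_sub_sqrt_div_sqrt_le {P Q : ℝ} (hP : 0 < P) (hQ : 0 ≤ Q) :
    |√Q - √P| / √P ≤ |Q - P| / P := by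
  have factor : |Q - P| = |√Q - √P| * (√Q + √P) := by
    rw [← abs_of_nonneg (by positivity : 0 ≤ √Q + √P), ← abs_mul, mul_comm, ← sq_sub_sq,
      sq_sqrt hQ, sq_sqrt hP.le]
  calc |√Q - √P| / √P = |√Q - √P| * √P / P := by
        rw [div_eq_div_iff (by positivity) hP.ne', mul_assoc, mul_self_sqrt hP.le]
    _ ≤ |Q - P| / P := by
        rw [factor]
        gcongr
        exact le_add_of_nonneg_left (sqrt_nonneg Q)

theorem abs_tauOfGains_sub_gains_le (V : ι → ℝ) {p q : ι → ℝ} {c : ℝ} (hc₀ : 0 < c) (hc₁ : c ≤ 1)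
    (hp : c ≤ ∑ i, p i) (hq₀ : ∀ i, 0 ≤ q i) (hq₁ : ∀ i, q i ≤ 1) (hq : 0 < ∑ i, q i) :
    |tauOfGains V p - tauOfGains V q| ≤ 2 / c * ‖V‖ * ∑ i, |p i - q i| := by
  set P := ∑ i, p i
  set Q := ∑ i, q i
  set D := ∑ i, |p i - q i|
  have hP : 0 < P := hc₀.trans_le hp
  have c_le_sqrt : c ≤ √P := le_sqrt_of_sq_le ((pow_le_of_le_one hc₀.le hc₁ two_ne_zero).trans hp)
  have numerator :
      |‖WithLp.toLp 2 (V * p)‖ - ‖WithLp.toLp 2 (V * q)‖| / √P ≤ ‖V‖ * D / c := by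
    gcongr
    refine (abs_norm_sub_norm_le _ _).trans ?_
    rw [← WithLp.toLp_sub, ← mul_sub]
    refine (norm_toLp_two_mul_le _ _).trans ?_
    gcongr
    exact norm_toLp_two_le_sum_abs (p - q)
  have denominator : |√Q - √P| / √P ≤ D / c := by
    refine (abs_sqrt_sub_sqrt_div_sqrt_le hP hq.le).trans ?_
    gcongr
    rw [abs_sub_comm, ← Finset.sum_sub_distrib]
    exact Finset.abs_sum_le_sum_abs _ _
  have split : tauOfGains V p - tauOfGains V q =
      (‖WithLp.toLp 2 (V * p)‖ - ‖WithLp.toLp 2 (V * q)‖) / √P +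
        tauOfGains V q * ((√Q - √P) / √P) := by
    have : √P ≠ 0 := (sqrt_pos.mpr hP).ne'
    have : √Q ≠ 0 := (sqrt_pos.mpr hq).ne'
    change _ / √P - _ / √Q = _ / √P + _ / √Q * _
    field_simp
    ring
  calc |tauOfGains V p - tauOfGains V q|
      ≤ |‖WithLp.toLp 2 (V * p)‖ - ‖WithLp.toLp 2 (V * q)‖| / √P +
          tauOfGains V q * (|√Q - √P| / √P) := by
        rw [split]
        refine (abs_add_le _ _).trans_eq ?_
        rw [abs_mul, abs_div, abs_div, abs_of_nonneg (sqrt_nonneg P),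
          abs_of_nonneg (tauOfGains_nonneg V q)]
    _ ≤ ‖V‖ * D / c + ‖V‖ * (D / c) := by
        gcongr
        exact tauOfGains_le_norm V hq₀ hq₁
    _ = 2 / c * ‖V‖ * D := by ring

theorem abs_tauOfGains_sub_le (W V : ι → ℝ) {p q : ι → ℝ} {c : ℝ} (hc₀ : 0 < c) (hc₁ : c ≤ 1)
    (hp₀ : ∀ i, 0 ≤ p i) (hp₁ : ∀ i, p i ≤ 1) (hp : c ≤ ∑ i, p i)
    (hq₀ : ∀ i, 0 ≤ q i) (hq₁ : ∀ i, q i ≤ 1) (hq : 0 < ∑ i, q i) :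
    |tauOfGains W p - tauOfGains V q| ≤ ‖W - V‖ + 2 / c * ‖V‖ * ∑ i, |p i - q i| :=
  (abs_sub_le _ (tauOfGains V p) _).trans <|
    add_le_add (abs_tauOfGains_sub_weights_le W V hp₀ hp₁)
      (abs_tauOfGains_sub_gains_le V hc₀ hc₁ hp hq₀ hq₁ hq)

end TauOfGains

section ProductEquation

variable {ι : Type*} [Fintype ι] {s t : ι → ℝ} {T U : ℝ}

theorem exists_pos_prod_one_add_mul_eq (hs : ∀ i, 0 ≤ s i) (hsum : 0 < ∑ i, s i) {M : ℝ}
    (hM : 1 < M) : ∃ T, 0 < T ∧ ∏ i, (1 + s i * T) = M := by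
  have top_nonneg : 0 ≤ M / ∑ i, s i := by positivity
  have M_le : M ≤ ∏ i, (1 + s i * (M / ∑ i, s i)) := by
    refine le_trans ?_ (one_add_sum_le_prod_one_add Finset.univ
      fun i _ => mul_nonneg (hs i) top_nonneg)
    rw [← Finset.sum_mul, mul_div_cancel₀ _ hsum.ne']
    linarith
  obtain ⟨T, hT, hTM⟩ := intermediate_value_Icc top_nonneg
    (f := fun T => ∏ i, (1 + s i * T)) (by fun_prop) ⟨by simpa using hM.le, M_le⟩
  refine ⟨T, hT.1.lt_of_ne ?_, hTM⟩
  rintro rfl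
  exact hM.ne (by simpa using hTM)

theorem sum_mul_le_prod_one_add_mul (hs : ∀ i, 0 ≤ s i) (hT : 0 ≤ T) :
    (∑ i, s i) * T ≤ ∏ i, (1 + s i * T) := by
  have := one_add_sum_le_prod_one_add Finset.univ fun i _ => mul_nonneg (hs i) hT
  rw [← Finset.sum_mul] at this
  linarith

theorem one_sub_inv_le_sum_wienerGain [Nonempty ι] {x : ι → ℝ} (hx : ∀ i, 0 ≤ x i) {b : ℝ}
    (hb : 0 < b) (h : b ^ Fintype.card ι ≤ ∏ i, (1 + x i)) :
    1 - b⁻¹ ≤ ∑ i, wienerGain (x i) := by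
  obtain ⟨j, hj⟩ : ∃ j, b ≤ 1 + x j := by
    contrapose! h
    calc ∏ i, (1 + x i) < ∏ _i : ι, b := Finset.prod_lt_prod_of_nonempty
          (fun i _ => by linarith [hx i]) (fun i _ => h i) Finset.univ_nonempty
      _ = b ^ Fintype.card ι := by rw [Finset.prod_const, Finset.card_univ]
  exact (one_sub_inv_le_wienerGain hb hj).trans <| Finset.single_le_sum
    (f := fun i => wienerGain (x i)) (fun i _ => wienerGain_nonneg (hx i)) (Finset.mem_univ j)

theorem sub_mul_sum_wienerGain_le (hs : ∀ i, 0 ≤ s i) (ht : ∀ i, 0 ≤ t i) (hT : 0 ≤ T)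
    (hU : 0 ≤ U) (h : ∏ i, (1 + s i * T) = ∏ i, (1 + t i * U)) :
    (U - T) * ∑ i, wienerGain (t i * U) ≤ T * U * ∑ i, |s i - t i| := by
  have sT_nonneg i : 0 ≤ s i * T := mul_nonneg (hs i) hT
  have tT_nonneg i : 0 ≤ t i * T := mul_nonneg (ht i) hT
  have tU_nonneg i : 0 ≤ t i * U := mul_nonneg (ht i) hU
  have sum_log_eq : ∑ i, log (1 + t i * U) = ∑ i, log (1 + s i * T) := by
    rw [← log_prod fun i _ => by linarith [tU_nonneg i],
      ← log_prod fun i _ => by linarith [sT_nonneg i], h]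
  calc (U - T) * ∑ i, wienerGain (t i * U)
      = U * ∑ i, (t i * U - t i * T) / (1 + t i * U) := by
        simp only [wienerGain, Finset.mul_sum]
        exact Finset.sum_congr rfl fun i _ => by ring
    _ ≤ U * ∑ i, (log (1 + t i * U) - log (1 + t i * T)) := by
        gcongr with i
        exact sub_div_one_add_le_log_sub_log (by linarith [tT_nonneg i]) (by linarith [tU_nonneg i])
    _ = U * ∑ i, (log (1 + s i * T) - log (1 + t i * T)) := by
        rw [Finset.sum_sub_distrib, sum_log_eq, Finset.sum_sub_distrib]
    _ ≤ U * ∑ i, |s i * T - t i * T| := by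
        gcongr with i
        exact log_one_add_sub_log_one_add_le (sT_nonneg i) (tT_nonneg i)
    _ = T * U * ∑ i, |s i - t i| := by
        simp only [← sub_mul, abs_mul, abs_of_nonneg hT, ← Finset.sum_mul]
        ring

theorem abs_sub_mul_le_of_le_sum_wienerGain (hs : ∀ i, 0 ≤ s i) (ht : ∀ i, 0 ≤ t i) (hT : 0 ≤ T)
    (hU : 0 ≤ U) (h : ∏ i, (1 + s i * T) = ∏ i, (1 + t i * U)) {c : ℝ}
    (hcs : c ≤ ∑ i, wienerGain (s i * T)) (hct : c ≤ ∑ i, wienerGain (t i * U)) :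
    |T - U| * c ≤ T * U * ∑ i, |s i - t i| := by
  rcases le_total T U with hTU | hUT
  · rw [abs_sub_comm, abs_of_nonneg (sub_nonneg.mpr hTU)]
    exact (mul_le_mul_of_nonneg_left hct (sub_nonneg.mpr hTU)).trans
      (sub_mul_sum_wienerGain_le hs ht hT hU h)
  · rw [abs_of_nonneg (sub_nonneg.mpr hUT), mul_comm T U]
    simp only [abs_sub_comm (s _)]
    exact (mul_le_mul_of_nonneg_left hcs (sub_nonneg.mpr hUT)).trans
      (sub_mul_sum_wienerGain_le ht hs hU hT h.symm)

theorem sum_abs_wienerGain_sub_le (hs : ∀ i, 0 ≤ s i) (ht : ∀ i, 0 ≤ t i) (hT : 0 ≤ T)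
    (hU : 0 ≤ U) :
    ∑ i, |wienerGain (s i * T) - wienerGain (t i * U)| ≤
      T * ∑ i, |s i - t i| + |T - U| * ∑ i, t i := by
  rw [Finset.mul_sum, Finset.mul_sum, ← Finset.sum_add_distrib]
  refine Finset.sum_le_sum fun i _ => ?_
  calc |wienerGain (s i * T) - wienerGain (t i * U)|
      ≤ |s i * T - t i * U| :=
        abs_wienerGain_sub_wienerGain_le (mul_nonneg (hs i) hT) (mul_nonneg (ht i) hU)
    _ = |T * (s i - t i) + (T - U) * t i| := by ring_nf
    _ ≤ T * |s i - t i| + |T - U| * t i := by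
        refine (abs_add_le _ _).trans_eq ?_
        rw [abs_mul, abs_mul, abs_of_nonneg hT, abs_of_nonneg (ht i)]

theorem sum_abs_wienerGain_sub_le_of_prod_eq (hs : ∀ i, 0 ≤ s i) (ht : ∀ i, 0 ≤ t i) (hT : 0 ≤ T)
    (hU : 0 ≤ U) {M N c : ℝ} (hsT : ∏ i, (1 + s i * T) = M) (htU : ∏ i, (1 + t i * U) = M)
    (hN : 1 ≤ N) (hs_sum : ∑ i, s i = N) (ht_sum : ∑ i, t i = N) (hc₀ : 0 < c) (hc₁ : c ≤ 1)
    (hcs : c ≤ ∑ i, wienerGain (s i * T)) (hct : c ≤ ∑ i, wienerGain (t i * U)) :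
    ∑ i, |wienerGain (s i * T) - wienerGain (t i * U)| ≤ 2 / c * M ^ 2 * ∑ i, |s i - t i| := by
  set Δ := ∑ i, |s i - t i|
  have NT_le : N * T ≤ M := hs_sum ▸ hsT ▸ sum_mul_le_prod_one_add_mul hs hT
  have NU_le : N * U ≤ M := ht_sum ▸ htU ▸ sum_mul_le_prod_one_add_mul ht hU
  have one_le_M : 1 ≤ M :=
    hsT ▸ Finset.one_le_prod fun i _ => le_add_of_nonneg_right (mul_nonneg (hs i) hT)
  have T_le : T ≤ M ^ 2 / c := by
    rw [le_div_iff₀ hc₀]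
    calc T * c ≤ N * T := by rw [mul_comm]; gcongr; exact hc₁.trans hN
      _ ≤ M ^ 2 := NT_le.trans (le_self_pow₀ one_le_M two_ne_zero)
  have drift : |T - U| * N ≤ M ^ 2 / c * Δ := by
    rw [div_mul_eq_mul_div, le_div_iff₀ hc₀]
    calc |T - U| * N * c = N * (|T - U| * c) := by ring
      _ ≤ N * (T * U * Δ) := by
          gcongr N * ?_
          exact abs_sub_mul_le_of_le_sum_wienerGain hs ht hT hU (hsT.trans htU.symm) hcs hct
      _ = T * (N * U) * Δ := by ring
      _ ≤ M * M * Δ := by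
          gcongr
          exact (le_mul_of_one_le_left hT hN).trans NT_le
      _ = M ^ 2 * Δ := by ring
  calc ∑ i, |wienerGain (s i * T) - wienerGain (t i * U)|
      ≤ T * Δ + |T - U| * N := ht_sum ▸ sum_abs_wienerGain_sub_le hs ht hT hU
    _ ≤ M ^ 2 / c * Δ + M ^ 2 / c * Δ := by gcongr
    _ = 2 / c * M ^ 2 * Δ := by ring

end ProductEquation

section RandomCodingRate

variable {n : ℕ} {s : Fin n → ℝ} {R T : ℝ}

theorem Rrc_eq_iff_prod_eq [NeZero n] (hs : ∀ j, 0 ≤ s j) (hT : 0 ≤ T) :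
    Rrc s T = R ↔ ∏ j, (1 + s j * T) = ((2 : ℝ) ^ (2 * R)) ^ n := by
  have factor_pos j : 0 < 1 + s j * T := by linarith [mul_nonneg (hs j) hT]
  have n_ne_zero : (n : ℝ) ≠ 0 := NeZero.ne _
  rw [Rrc, ← logb_prod _ _ fun j _ => (factor_pos j).ne', one_div_mul_eq_div,
    div_eq_iff (mul_ne_zero two_ne_zero n_ne_zero),
    logb_eq_iff_rpow_eq two_pos (by norm_num) (Finset.prod_pos fun j _ => factor_pos j),
    ← rpow_mul_natCast two_pos.le, eq_comm,
    mul_comm R, mul_right_comm]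

theorem Trc_spec [NeZero n] (hs : ∀ j, 0 ≤ s j) (hsum : 0 < ∑ j, s j) (hR : 0 < R) :
    0 < Trc s R ∧ ∏ j, (1 + s j * Trc s R) = ((2 : ℝ) ^ (2 * R)) ^ n := by
  obtain ⟨T, hT, hprod⟩ := exists_pos_prod_one_add_mul_eq hs hsum
    (one_lt_pow₀ (one_lt_rpow one_lt_two (by positivity : 0 < 2 * R)) (NeZero.ne n))
  have spec : 0 < Trc s R ∧ Rrc s (Trc s R) = R :=
    Classical.epsilon_spec (p := fun T => 0 < T ∧ Rrc s T = R)
      ⟨T, hT, (Rrc_eq_iff_prod_eq hs hT.le).mpr hprod⟩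
  exact ⟨spec.1, (Rrc_eq_iff_prod_eq hs spec.1.le).mp spec.2⟩

theorem one_sub_two_rpow_neg_pos (hR : 0 < R) : 0 < 1 - (2 : ℝ) ^ (-(2 * R)) :=
  sub_pos.mpr (rpow_lt_one_of_one_lt_of_neg one_lt_two (by linarith))

theorem sq_two_rpow_pow_eq (n : ℕ) (R : ℝ) :
    (((2 : ℝ) ^ (2 * R)) ^ n) ^ 2 = 2 ^ (4 * n * R) := by
  rw [← pow_mul, ← rpow_mul_natCast two_pos.le]
  push_cast
  ring_nf

theorem one_sub_two_rpow_neg_le_sum_wienerGain [NeZero n] {x : Fin n → ℝ} (hx : ∀ j, 0 ≤ x j)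
    (h : ∏ j, (1 + x j) = ((2 : ℝ) ^ (2 * R)) ^ n) :
    1 - (2 : ℝ) ^ (-(2 * R)) ≤ ∑ j, wienerGain (x j) := by
  rw [rpow_neg two_pos.le]
  exact one_sub_inv_le_sum_wienerGain hx (by positivity) (by rw [h, Fintype.card_fin])

end RandomCodingRate

section TauDef

variable {n : ℕ}

theorem l2norm_eq_norm_toLp (v : Fin n → ℝ) : l2norm v = ‖WithLp.toLp 2 v‖ := by
  simp only [l2norm, EuclideanSpace.norm_eq, norm_eq_abs, sq_abs]

theorem sum_abs_le_sqrt_mul_l2norm (v : Fin n → ℝ) : ∑ j, |v j| ≤ √n * l2norm v := by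
  rw [l2norm, ← sqrt_mul (Nat.cast_nonneg n)]
  refine le_sqrt_of_sq_le ?_
  simpa only [sq_abs, Finset.card_fin] using
    sq_sum_le_card_mul_sum_sq (s := Finset.univ) (f := fun j => |v j|)

theorem tauDef_eq_tauOfGains (s W : Fin n → ℝ) {T : ℝ} (hT : 0 < T) :
    tauDef s W T = tauOfGains W fun j => wienerGain (s j * T) := by
  have numerator : ‖WithLp.toLp 2 (W * fun j => wienerGain (s j * T))‖ =
      √T * √(T * ∑ j, W j ^ 2 * s j ^ 2 / (1 + s j * T) ^ 2) := by
    rw [← l2norm_eq_norm_toLp, l2norm, ← sqrt_mul hT.le, Finset.mul_sum, Finset.mul_sum]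
    congr 1
    refine Finset.sum_congr rfl fun j _ => ?_
    rw [Pi.mul_apply, wienerGain, mul_pow, div_pow]
    ring
  have denominator : √(∑ j, wienerGain (s j * T)) = √T * √(∑ j, s j / (1 + s j * T)) := by
    rw [← sqrt_mul hT.le, Finset.mul_sum]
    congr 1
    exact Finset.sum_congr rfl fun j _ => by rw [wienerGain]; ring
  rw [tauOfGains, numerator, denominator, mul_div_mul_left _ _ (sqrt_pos.mpr hT).ne', tauDef]

theorem stmt_11_general [NeZero n] {R : ℝ} (hR : 0 < R) (W V : Fin n → ℝ) {s t : Fin n → ℝ}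
    (hs : ∀ j, 0 ≤ s j) (ht : ∀ j, 0 ≤ t j) (hs_sum : ∑ j, s j = n) (ht_sum : ∑ j, t j = n) :
    |tauDef s W (Trc s R) - tauDef t V (Trc t R)| ≤
      ‖W - V‖ + 4 / (1 - (2 : ℝ) ^ (-(2 * R))) ^ 2 * ‖V‖ * (√n * l2norm (s - t)) *
        2 ^ (4 * n * R) := by
  have one_le_n : (1 : ℝ) ≤ n := Nat.one_le_cast.mpr NeZero.one_le
  obtain ⟨hT, hsT⟩ := Trc_spec hs (by linarith) hR
  obtain ⟨hU, htU⟩ := Trc_spec ht (by linarith) hR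
  set T := Trc s R
  set U := Trc t R
  have sT_nonneg j : 0 ≤ s j * T := mul_nonneg (hs j) hT.le
  have tU_nonneg j : 0 ≤ t j * U := mul_nonneg (ht j) hU.le
  set p := fun j => wienerGain (s j * T)
  set q := fun j => wienerGain (t j * U)
  set c := 1 - (2 : ℝ) ^ (-(2 * R))
  have c_pos : 0 < c := one_sub_two_rpow_neg_pos hR
  have c_le_one : c ≤ 1 := sub_le_self _ (by positivity)
  have c_le_p : c ≤ ∑ j, p j := one_sub_two_rpow_neg_le_sum_wienerGain sT_nonneg hsT
  have c_le_q : c ≤ ∑ j, q j := one_sub_two_rpow_neg_le_sum_wienerGain tU_nonneg htU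
  have gains_close : ∑ j, |p j - q j| ≤
      2 / c * (((2 : ℝ) ^ (2 * R)) ^ n) ^ 2 * ∑ j, |s j - t j| :=
    sum_abs_wienerGain_sub_le_of_prod_eq hs ht hT.le hU.le hsT htU one_le_n
      hs_sum ht_sum c_pos c_le_one c_le_p c_le_q
  clear_value c
  rw [sq_two_rpow_pow_eq] at gains_close
  rw [tauDef_eq_tauOfGains s W hT, tauDef_eq_tauOfGains t V hU]
  calc |tauOfGains W p - tauOfGains V q|
      ≤ ‖W - V‖ + 2 / c * ‖V‖ * ∑ j, |p j - q j| :=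
        abs_tauOfGains_sub_le W V c_pos c_le_one (fun j => wienerGain_nonneg (sT_nonneg j))
          (fun j => wienerGain_le_one (sT_nonneg j)) c_le_p
          (fun j => wienerGain_nonneg (tU_nonneg j))
          (fun j => wienerGain_le_one (tU_nonneg j)) (c_pos.trans_le c_le_q)
    _ ≤ ‖W - V‖ + 2 / c * ‖V‖ * (2 / c * 2 ^ (4 * n * R) * (√n * l2norm (s - t))) := by
        gcongr
        refine gains_close.trans ?_
        gcongr
        exact sum_abs_le_sqrt_mul_l2norm (s - t)
    _ = ‖W - V‖ + 4 / c ^ 2 * ‖V‖ * (√n * l2norm (s - t)) * 2 ^ (4 * n * R) := by ring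

end TauDef

/-- `τ` perturbation bound. The sup norm `‖·‖` on `Fin n → ℝ` is `‖·‖∞`. -/
theorem stmt_11 (Rstar : ℝ) (hRstar : 0 < Rstar) :
    ∃ c : ℝ, 0 < c ∧ ∃ n₀ : ℕ, ∀ n : ℕ, n₀ ≤ n →
      ∀ (CW γ₁ γ₂ : ℝ), 0 ≤ CW →
      ∀ (W Wh s sh : Fin n → ℝ),
        (∀ j, 0 ≤ s j) → (∀ j, 0 ≤ sh j) →
        ‖W‖ ≤ CW → ‖Wh‖ ≤ CW →
        (∑ j, s j) = (n : ℝ) → (∑ j, sh j) = (n : ℝ) →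
        ‖W - Wh‖ ≤ γ₁ * CW →
        l2norm (s - sh) ≤ γ₂ * Real.sqrt (n : ℝ) →
        |tauDef s W (Trc s Rstar) - tauDef sh Wh (Trc sh Rstar)|
          ≤ γ₁ * CW + c * CW * γ₂ * (n : ℝ) ^ 4 * (2 : ℝ) ^ (4 * (n : ℝ) * Rstar) := by
  have c_pos := one_sub_two_rpow_neg_pos hRstar
  refine ⟨4 / (1 - (2 : ℝ) ^ (-(2 * Rstar))) ^ 2, by positivity, 1, ?_⟩
  intro n hn CW γ₁ γ₂ hCW W Wh s sh hs hsh _ hWh hs_sum hsh_sum hW_close hs_close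
  have : NeZero n := ⟨by lia⟩
  have one_le_n : (1 : ℝ) ≤ n := Nat.one_le_cast.mpr hn
  have γ₂_nonneg : 0 ≤ γ₂ :=
    nonneg_of_mul_nonneg_left ((sqrt_nonneg _).trans hs_close) (sqrt_pos.mpr (by linarith))
  have hs_scaled : √n * l2norm (s - sh) ≤ γ₂ * n ^ 4 := calc
    √n * l2norm (s - sh) ≤ √n * (γ₂ * √n) := by gcongr
    _ = γ₂ * n := by rw [mul_left_comm, mul_self_sqrt (by positivity)]
    _ ≤ γ₂ * n ^ 4 := by gcongr; exact le_self_pow₀ one_le_n (by norm_num)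
  refine (stmt_11_general hRstar W Wh hs hsh hs_sum hsh_sum).trans ?_
  rw [mul_assoc _ γ₂]
  gcongr
  exact mul_nonneg (sqrt_nonneg _) (sqrt_nonneg _)
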